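/- arXiv:2105.00413 — 2 statements merged into one kernel-verified Lean document; each statement's English description precedes it below -/
import Mathlib

section
/- If M is an (n,k)-weak cotorsion right R-module and D is an m-th cosyzygy of M (i.e., the final cokernel of an injective resolution of M truncated after m terms), then D is (n, m+k)-weak cotorsion. -/
/-!
Common definitions for formalizing "(n,k)-weak cotorsion modules" over an arbitrary
(not necessarily commutative) ring `R`.  Left `R`-modules are objects of
`ModuleCat R`, right `R`-modules are objects of `ModuleCat Rᵐᵒᵖ`.

Since Mathlib does not provide `Tor` of a right module with a left module over a
noncommutative ring, we encode the vanishing of `Tor_i^R(N, M)` (for `N` a right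
module and `M` a left module) by the equivalent condition
`Ext^i_{Rᵐᵒᵖ}(N, M⋆) = 0`, where `M⋆ = Hom_ℤ(M, ℚ/ℤ)` is the character module
(a right module).  This is equivalent because `ℚ/ℤ` is an injective cogenerator:
`Ext^i_{Rᵐᵒᵖ}(N, M⋆) ≅ (Tor_i^R(N, M))⋆`, and an abelian group vanishes iff its
character group does.
-/

open CategoryTheory

universe u

noncomputable section

/-- The character group `Hom_ℤ(N, ℚ/ℤ)`. -/
def CharGroup (N : Type u) [AddCommGroup N] : Type u := N →+ AddCircle (1 : ℚ)

instance (N : Type u) [AddCommGroup N] : AddCommGroup (CharGroup N) :=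
  inferInstanceAs (AddCommGroup (N →+ AddCircle (1 : ℚ)))

namespace CharGroup

variable {N : Type u} [AddCommGroup N]

/-- View an element of the character group as an additive monoid hom. -/
def toHom (f : CharGroup N) : N →+ AddCircle (1 : ℚ) := f

/-- Build an element of the character group from an additive monoid hom. -/
def ofHom (f : N →+ AddCircle (1 : ℚ)) : CharGroup N := f

theorem hom_ext {f g : CharGroup N} (h : ∀ m, toHom f m = toHom g m) : f = g :=
  AddMonoidHom.ext h

end CharGroup

open CharGroup in
/-- Left module structure on the character group of a right module. -/
instance charGroupModuleLeft (R : Type u) [Ring R] (N : Type u) [AddCommGroup N]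
    [Module Rᵐᵒᵖ N] : Module R (CharGroup N) where
  smul r f := ofHom ((toHom f).comp
    (AddMonoidHom.mk' (fun m => MulOpposite.op r • m) (fun a b => smul_add _ a b)))
  one_smul f := hom_ext fun m => by
    show toHom f (MulOpposite.op (1 : R) • m) = toHom f m
    rw [MulOpposite.op_one, one_smul]
  mul_smul r s f := hom_ext fun m => by
    show toHom f (MulOpposite.op (r * s) • m)
      = toHom f (MulOpposite.op s • MulOpposite.op r • m)
    rw [MulOpposite.op_mul, mul_smul]
  smul_zero r := CharGroup.hom_ext fun m => rfl
  smul_add r f g := CharGroup.hom_ext fun m => rfl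
  add_smul r s f := hom_ext fun m => by
    show toHom f (MulOpposite.op (r + s) • m)
      = toHom f (MulOpposite.op r • m) + toHom f (MulOpposite.op s • m)
    rw [MulOpposite.op_add, add_smul, map_add]
  zero_smul f := hom_ext fun m => by
    show toHom f (MulOpposite.op (0 : R) • m) = 0
    rw [MulOpposite.op_zero, zero_smul, map_zero]

open CharGroup in
/-- Right module structure on the character group of a left module. -/
instance charGroupModuleRight (R : Type u) [Ring R] (N : Type u) [AddCommGroup N]
    [Module R N] : Module Rᵐᵒᵖ (CharGroup N) where
  smul r f := ofHom ((toHom f).comp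
    (AddMonoidHom.mk' (fun m => r.unop • m) (fun a b => smul_add _ a b)))
  one_smul f := hom_ext fun m => by
    show toHom f ((1 : Rᵐᵒᵖ).unop • m) = toHom f m
    rw [MulOpposite.unop_one, one_smul]
  mul_smul r s f := hom_ext fun m => by
    show toHom f ((r * s).unop • m) = toHom f (s.unop • r.unop • m)
    rw [MulOpposite.unop_mul, mul_smul]
  smul_zero r := CharGroup.hom_ext fun m => rfl
  smul_add r f g := CharGroup.hom_ext fun m => rfl
  add_smul r s f := hom_ext fun m => by
    show toHom f ((r + s).unop • m) = toHom f (r.unop • m) + toHom f (s.unop • m)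
    rw [MulOpposite.unop_add, add_smul, map_add]
  zero_smul f := hom_ext fun m => by
    show toHom f ((0 : Rᵐᵒᵖ).unop • m) = 0
    rw [MulOpposite.unop_zero, zero_smul, map_zero]

variable (R : Type u) [Ring R]

/-- `extVanish S i A B` says that `Ext^i_S(A, B) = 0`. -/
def extVanish (S : Type u) [Ring S] (i : ℕ) (A B : ModuleCat.{u} S) : Prop :=
  Subsingleton (((Ext ℤ (ModuleCat.{u} S) i).obj (Opposite.op A)).obj B)

/-- The character module of a right `R`-module, as a left `R`-module. -/
def charLeft (N : ModuleCat.{u} Rᵐᵒᵖ) : ModuleCat.{u} R :=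
  ModuleCat.of R (CharGroup N)

/-- The character module of a left `R`-module, as a right `R`-module. -/
def charRight (M : ModuleCat.{u} R) : ModuleCat.{u} Rᵐᵒᵖ :=
  ModuleCat.of Rᵐᵒᵖ (CharGroup M)

/-- `torVanish R i N M` encodes `Tor_i^R(N, M) = 0` for a right module `N` and a
left module `M`, via the character module duality
`Ext^i_R(M, N⋆) ≅ (Tor_i^R(N, M))⋆`. -/
def torVanish (i : ℕ) (N : ModuleCat.{u} Rᵐᵒᵖ) (M : ModuleCat.{u} R) : Prop :=
  extVanish R i M (charLeft R N)

/-- `K` is a special super finitely presented `S`-module (for the parameter `n`):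
`K` is the image of `F_n → F_{n-1}` in a projective resolution
`⋯ → F_{n+1} → F_n → ⋯ → F_0 → U → 0` of some module `U` in which `F_i` is finitely
generated projective for all `i ≥ n`.  (For `n = 0` the distinguished module is `U`
itself, matching `Ext^{n+1}(U, -) ≅ Ext^1(K_{n-1}, -)`.) -/
def IsSpecialSFP (S : Type u) [Ring S] (n : ℕ) (K : ModuleCat.{u} S) : Prop :=
  ∃ (U : ModuleCat.{u} S) (F : ℕ → ModuleCat.{u} S)
    (d : ∀ i, F (i + 1) →ₗ[S] F i) (π : F 0 →ₗ[S] U),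
      (∀ i, Module.Projective S (F i)) ∧
      (∀ i, n ≤ i → Module.Finite S (F i)) ∧
      Function.Surjective π ∧ Function.Exact (d 0) π ∧
      (∀ i, Function.Exact (d (i + 1)) (d i)) ∧
      (if n = 0 then Nonempty ((K : Type u) ≃ₗ[S] U)
       else Nonempty ((K : Type u) ≃ₗ[S] LinearMap.range (d (n - 1))))

/-- The `n`-weak injective dimension of a left `S`-module `M` is at most `k`. -/
def nwidLE (S : Type u) [Ring S] (n k : ℕ) (M : ModuleCat.{u} S) : Prop :=
  ∀ K : ModuleCat.{u} S, IsSpecialSFP S n K → extVanish S (k + 1) K M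

/-- The `n`-weak flat dimension of a right `R`-module `N` is at most `k`:
`Tor_{k+1}^R(N, K) = 0` for every special super finitely presented left module `K`. -/
def nwfdLE (n k : ℕ) (N : ModuleCat.{u} Rᵐᵒᵖ) : Prop :=
  ∀ K : ModuleCat.{u} R, IsSpecialSFP R n K → torVanish R (k + 1) N K

/-- A right `R`-module `M` is `(n,k)`-weak cotorsion if `Ext^1(N, M) = 0` for every
right module `N` of `n`-weak flat dimension at most `k`. -/
def IsNKWeakCotorsion (n k : ℕ) (M : ModuleCat.{u} Rᵐᵒᵖ) : Prop :=
  ∀ N : ModuleCat.{u} Rᵐᵒᵖ, nwfdLE R n k N → extVanish Rᵐᵒᵖ 1 N M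

/-- Projective dimension at most `k`, via Ext vanishing. -/
def pdLE (S : Type u) [Ring S] (k : ℕ) (K : ModuleCat.{u} S) : Prop :=
  ∀ M : ModuleCat.{u} S, extVanish S (k + 1) K M

/-- Injective dimension at most `k`, via Ext vanishing. -/
def idLE (S : Type u) [Ring S] (k : ℕ) (M : ModuleCat.{u} S) : Prop :=
  ∀ N : ModuleCat.{u} S, extVanish S (k + 1) N M

/-- Flat dimension of a right module at most `k`, via Tor vanishing. -/
def fdLE (k : ℕ) (N : ModuleCat.{u} Rᵐᵒᵖ) : Prop :=
  ∀ A : ModuleCat.{u} R, torVanish R (k + 1) N A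

/-- `l.n.sp.gldim(R) ≤ k` : every special super finitely presented left module has
projective dimension at most `k`. -/
def lnspGldimLE (n k : ℕ) : Prop :=
  ∀ K : ModuleCat.{u} R, IsSpecialSFP R n K → pdLE R k K

/-- `w.gl.dim(R) ≤ k`. -/
def wGldimLE (k : ℕ) : Prop :=
  ∀ N : ModuleCat.{u} Rᵐᵒᵖ, fdLE R k N

/-- A right `R`-module `M` is `k`-cotorsion if `Ext^1(F, M) = 0` for every right
module `F` of flat dimension at most `k`. -/
def IsKCotorsion (k : ℕ) (M : ModuleCat.{u} Rᵐᵒᵖ) : Prop :=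
  ∀ F : ModuleCat.{u} Rᵐᵒᵖ, fdLE R k F → extVanish Rᵐᵒᵖ 1 F M

/-- `φ : E → D` is a `𝒞`-precover of `D`. -/
def IsPrecover (S : Type u) [Ring S] (𝒞 : ModuleCat.{u} S → Prop)
    (E D : ModuleCat.{u} S) (φ : E →ₗ[S] D) : Prop :=
  𝒞 E ∧ ∀ F : ModuleCat.{u} S, 𝒞 F → ∀ g : F →ₗ[S] D, ∃ h : F →ₗ[S] E, φ ∘ₗ h = g

/-- `φ : E → D` is a `𝒞`-cover of `D`. -/
def IsCover (S : Type u) [Ring S] (𝒞 : ModuleCat.{u} S → Prop)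
    (E D : ModuleCat.{u} S) (φ : E →ₗ[S] D) : Prop :=
  IsPrecover S 𝒞 E D φ ∧ ∀ g : E →ₗ[S] E, φ ∘ₗ g = φ → Function.Bijective g

/-- `f : X → F` is a `𝒞`-preenvelope of `X`. -/
def IsPreenvelope (S : Type u) [Ring S] (𝒞 : ModuleCat.{u} S → Prop)
    (X F : ModuleCat.{u} S) (f : X →ₗ[S] F) : Prop :=
  𝒞 F ∧ ∀ F' : ModuleCat.{u} S, 𝒞 F' → ∀ g : X →ₗ[S] F', ∃ h : F →ₗ[S] F', h ∘ₗ f = g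

/-- A module is reduced if it has no nonzero injective submodules. -/
def IsReducedModule (S : Type u) [Ring S] (M : ModuleCat.{u} S) : Prop :=
  ∀ N : Submodule S M, Module.Injective S N → N = ⊥

/-- `D` is an `m`-th cosyzygy of `M`: there is an exact sequence
`0 → M → E^0 → ⋯ → E^{m-1} → D → 0` with each `E^i` injective. -/
def IsCosyzygy (S : Type u) [Ring S] : ℕ → ModuleCat.{u} S → ModuleCat.{u} S → Prop
  | 0, M, D => Nonempty ((M : Type u) ≃ₗ[S] D)
  | m + 1, M, D => ∃ (C E : ModuleCat.{u} S), IsCosyzygy S m M C ∧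
      Module.Injective S E ∧
      ∃ (ι : C →ₗ[S] E) (p : E →ₗ[S] D),
        Function.Injective ι ∧ Function.Surjective p ∧ Function.Exact ι p


/-- A left `R`-module `F` is flat: `Tor_1(A, F) = 0` for every right module `A`
(encoded via character duality, as above). -/
def IsFlatModule (R : Type u) [Ring R] (F : ModuleCat.{u} R) : Prop :=
  ∀ A : ModuleCat.{u} Rᵐᵒᵖ, torVanish R 1 A F

end

/-!
The theorem is a chain of dimension shifts. If `0 → C → E → D → 0` is exact with `E` injective and
`0 → L → P → N → 0` is exact with `P` projective, then `Ext¹(N, D) ≅ Ext²(N, C) ≅ Ext¹(L, C)`,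
so `D` sees `N` as `C` sees the syzygy `L`. Passing from `N` to `L` lowers the `n`-weak flat
dimension, which is read off from the groups `Ext(K, N⋆)`, by one: the exact character functor
`(-)⋆` sends `P` to an injective module, since `Hom_R(X, P⋆) ≅ Hom_{Rᵐᵒᵖ}(P, X⋆)` is exact in `X`,
so `Ext` shifts along `0 → N⋆ → P⋆ → L⋆ → 0`.
-/

section ExtComparison

variable {C : Type*} [Category* C] [Abelian C] {X : C}

theorem subsingleton_leftDerivedExt_succ_iff {R₀ : Type*} [Ring R₀] [Linear R₀ C]
    [EnoughProjectives C] (P : ProjectiveResolution X) (Y : C) (i : ℕ) :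
    Subsingleton (((Ext R₀ C (i + 1)).obj (Opposite.op X)).obj Y) ↔
      ∀ f : P.complex.X (i + 1) ⟶ Y, P.complex.d (i + 2) (i + 1) ≫ f = 0 →
        ∃ g : P.complex.X i ⟶ Y, P.complex.d (i + 1) i ≫ g = f := by
  rw [← ModuleCat.isZero_iff_subsingleton, (P.isoExt (R := R₀) (i + 1) Y).isZero_iff,
    ← HomologicalComplex.exactAt_iff_isZero_homology,
    HomologicalComplex.exactAt_iff' _ i (i + 1) (i + 2) (by simp) (by simp),
    ShortComplex.moduleCat_exact_iff]
  rfl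

theorem subsingleton_abelianExt_succ_iff [HasExt C] (P : ProjectiveResolution X) (Y : C) (i : ℕ) :
    Subsingleton (Abelian.Ext X Y (i + 1)) ↔
      ∀ f : P.complex.X (i + 1) ⟶ Y, P.complex.d (i + 2) (i + 1) ≫ f = 0 →
        ∃ g : P.complex.X i ⟶ Y, P.complex.d (i + 1) i ≫ g = f := by
  constructor
  · intro _ f hf
    exact (P.extMk_eq_zero_iff f (i + 2) rfl hf i rfl).1 (Subsingleton.elim _ _)
  · refine fun h ↦ subsingleton_of_forall_eq 0 fun α ↦ ?_
    obtain ⟨f, hf, rfl⟩ := P.extMk_surjective α (i + 2) rfl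
    exact (P.extMk_eq_zero_iff f (i + 2) rfl hf i rfl).2 (h f hf)

end ExtComparison

theorem postcomp_extClass_injective_of_injective_X₂ {C : Type*} [Category* C] [Abelian C]
    [HasExt C] (X : C) {S : ShortComplex C} (hS : S.ShortExact) (hI : Injective S.X₂) (i : ℕ) :
    Function.Injective (hS.extClass.postcomp X (rfl : (i + 1) + 1 = i + 2)) := by
  refine (injective_iff_map_eq_zero _).2 fun x hx ↦ ?_
  obtain ⟨y, rfl⟩ := Abelian.Ext.covariant_sequence_exact₃ X hS x rfl hx
  rw [Abelian.Ext.eq_zero_of_injective y, Abelian.Ext.zero_comp]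

theorem shortExact_moduleCatMk {S : Type*} [Ring S] {X Y Z : Type u} [AddCommGroup X]
    [AddCommGroup Y] [AddCommGroup Z] [Module S X] [Module S Y] [Module S Z]
    {f : X →ₗ[S] Y} {g : Y →ₗ[S] Z} (hf : Function.Injective f) (hg : Function.Surjective g)
    (hfg : Function.Exact f g) :
    (ShortComplex.moduleCatMk f g hfg.linearMap_comp_eq_zero).ShortExact where
  exact := (ShortComplex.ShortExact.moduleCat_exact_iff_function_exact _).2 hfg
  mono_f := (ModuleCat.mono_iff_injective _).2 hf
  epi_g := (ModuleCat.epi_iff_surjective _).2 hg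

section ExtVanish

variable {S : Type u} [Ring S] {i : ℕ} {A B : ModuleCat.{u} S}

theorem extVanish_succ_iff : extVanish S (i + 1) A B ↔ Subsingleton (Abelian.Ext A B (i + 1)) :=
  let P := ProjectiveResolution.of A
  (subsingleton_leftDerivedExt_succ_iff P B i).trans (subsingleton_abelianExt_succ_iff P B i).symm

theorem extVanish.congr_right (h : extVanish S i A B) {B' : ModuleCat.{u} S}
    (e : B ≃ₗ[S] B') : extVanish S i A B' := by
  unfold extVanish at h
  exact (((Ext ℤ (ModuleCat.{u} S) i).obj (Opposite.op A)).mapIso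
    e.toModuleIso).toLinearEquiv.symm.toEquiv.subsingleton

theorem extVanish.cosyzygy {C E D : ModuleCat.{u} S} [Module.Injective S E] {ι : C →ₗ[S] E}
    {p : E →ₗ[S] D} (hι : Function.Injective ι) (hp : Function.Surjective p)
    (hexact : Function.Exact ι p) (h : extVanish S (i + 2) A C) : extVanish S (i + 1) A D := by
  rw [extVanish_succ_iff] at h ⊢
  have hE : Injective (ModuleCat.of S E) := Module.injective_object_of_injective_module S E
  have hT := shortExact_moduleCatMk hι hp hexact
  exact @Function.Injective.subsingleton _ _ _
    (postcomp_extClass_injective_of_injective_X₂ A hT hE i) h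

theorem extVanish.of_syzygy {T : ShortComplex (ModuleCat.{u} S)} (hT : T.ShortExact)
    [Projective T.X₂] (h : extVanish S (i + 1) T.X₁ B) : extVanish S (i + 2) T.X₃ B := by
  rw [extVanish_succ_iff] at h ⊢
  exact (precomp_extClass_surjective_of_projective_X₂ B hT (i + 1)).subsingleton

end ExtVanish

namespace CharGroup

variable {R : Type u} [Ring R]

section RightModule

variable {A B C : Type u} [AddCommGroup A] [AddCommGroup B] [AddCommGroup C]
  [Module Rᵐᵒᵖ A] [Module Rᵐᵒᵖ B] [Module Rᵐᵒᵖ C]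

/-- The map of left modules `B⋆ → A⋆` dual to a map `A → B` of right modules. -/
def dualLeft (f : A →ₗ[Rᵐᵒᵖ] B) : CharGroup B →ₗ[R] CharGroup A where
  toFun c := ofHom ((toHom c).comp f.toAddMonoidHom)
  map_add' _ _ := rfl
  map_smul' r c := hom_ext fun a ↦ congrArg (toHom c) (f.map_smul (MulOpposite.op r) a).symm

theorem dualLeft_injective {f : A →ₗ[Rᵐᵒᵖ] B} (hf : Function.Surjective f) :
    Function.Injective (dualLeft f) := fun c d hcd ↦ hom_ext fun b ↦ by
  obtain ⟨a, rfl⟩ := hf b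
  exact congrArg (toHom · a) hcd

theorem dualLeft_surjective {f : A →ₗ[Rᵐᵒᵖ] B} (hf : Function.Injective f) :
    Function.Surjective (dualLeft f) :=
  CharacterModule.dual_surjective_of_injective f.toAddMonoidHom.toIntLinearMap hf

theorem dualLeft_exact {f : A →ₗ[Rᵐᵒᵖ] B} {g : B →ₗ[Rᵐᵒᵖ] C} (hfg : Function.Exact f g)
    (hg : Function.Surjective g) : Function.Exact (dualLeft g) (dualLeft f) := by
  refine fun c ↦ ⟨fun hc ↦ ?_, ?_⟩
  · have hker : g.toAddMonoidHom.ker ≤ (toHom c).ker := fun b hb ↦ by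
      obtain ⟨a, rfl⟩ := (hfg b).1 hb
      exact congrArg (toHom · a) hc
    exact ⟨ofHom (g.toAddMonoidHom.liftOfSurjective hg ⟨toHom c, hker⟩),
      g.toAddMonoidHom.liftOfRightInverse_comp _ _ ⟨toHom c, hker⟩⟩
  · rintro ⟨d, rfl⟩
    exact hom_ext fun a ↦ (congrArg (toHom d) (hfg.apply_apply_eq_zero a)).trans (map_zero _)

end RightModule

section LeftModule

variable {X Y : Type u} [AddCommGroup X] [AddCommGroup Y] [Module R X] [Module R Y]

/-- The map of right modules `Y⋆ → X⋆` dual to a map `X → Y` of left modules. -/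
def dualRight (f : X →ₗ[R] Y) : CharGroup Y →ₗ[Rᵐᵒᵖ] CharGroup X where
  toFun c := ofHom ((toHom c).comp f.toAddMonoidHom)
  map_add' _ _ := rfl
  map_smul' r c := hom_ext fun x ↦ congrArg (toHom c) (f.map_smul r.unop x).symm

theorem dualRight_surjective {f : X →ₗ[R] Y} (hf : Function.Injective f) :
    Function.Surjective (dualRight f) :=
  CharacterModule.dual_surjective_of_injective f.toAddMonoidHom.toIntLinearMap hf

variable (R X) in
/-- The adjunction `Hom_R(X, P⋆) ≃ Hom_{Rᵐᵒᵖ}(P, X⋆)`: both sides are the balanced biadditive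
pairings `X × P → ℚ/ℤ`. -/
def homEquiv (P : Type u) [AddCommGroup P] [Module Rᵐᵒᵖ P] :
    (X →ₗ[R] CharGroup P) ≃ (P →ₗ[Rᵐᵒᵖ] CharGroup X) where
  toFun g :=
    { toFun p := ofHom (AddMonoidHom.mk' (fun x ↦ toHom (g x) p) fun x y ↦
        congrArg (toHom · p) (g.map_add x y))
      map_add' p q := hom_ext fun x ↦ (toHom (g x)).map_add p q
      map_smul' r p := hom_ext fun x ↦ congrArg (toHom · p) (g.map_smul r.unop x).symm }
  invFun h :=
    { toFun x := ofHom (AddMonoidHom.mk' (fun p ↦ toHom (h p) x) fun p q ↦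
        congrArg (toHom · x) (h.map_add p q))
      map_add' x y := hom_ext fun p ↦ (toHom (h p)).map_add x y
      map_smul' r x := hom_ext fun p ↦
        congrArg (toHom · x) (h.map_smul (MulOpposite.op r) p).symm }
  left_inv _ := rfl
  right_inv _ := rfl

end LeftModule

theorem injective_of_projective (P : Type u) [AddCommGroup P] [Module Rᵐᵒᵖ P]
    [Module.Projective Rᵐᵒᵖ P] : Module.Injective R (CharGroup P) where
  out X Y _ _ _ _ f hf g := by
    obtain ⟨h, hh⟩ := Module.projective_lifting_property (dualRight f) (homEquiv R X P g)
      (dualRight_surjective hf)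
    have hcomp : (homEquiv R Y P).symm h ∘ₗ f = g := (homEquiv R X P).injective hh
    exact ⟨(homEquiv R Y P).symm h, LinearMap.congr_fun hcomp⟩

end CharGroup

section WeakCotorsion

variable {R : Type u} [Ring R] {n k : ℕ}

theorem torVanish.syzygy {T : ShortComplex (ModuleCat.{u} Rᵐᵒᵖ)} (hT : T.ShortExact)
    [Module.Projective Rᵐᵒᵖ T.X₂] {i : ℕ} {A : ModuleCat.{u} R}
    (h : torVanish R (i + 2) T.X₃ A) : torVanish R (i + 1) T.X₁ A := by
  have hexact : Function.Exact T.f.hom T.g.hom :=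
    (ShortComplex.ShortExact.moduleCat_exact_iff_function_exact T).1 hT.exact
  have : Module.Injective R (charLeft R T.X₂) := CharGroup.injective_of_projective T.X₂
  exact extVanish.cosyzygy (C := charLeft R T.X₃) (E := charLeft R T.X₂) (D := charLeft R T.X₁)
    (CharGroup.dualLeft_injective hT.moduleCat_surjective_g)
    (CharGroup.dualLeft_surjective hT.moduleCat_injective_f)
    (CharGroup.dualLeft_exact hexact hT.moduleCat_surjective_g) h

theorem nwfdLE.syzygy {T : ShortComplex (ModuleCat.{u} Rᵐᵒᵖ)} (hT : T.ShortExact)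
    [Module.Projective Rᵐᵒᵖ T.X₂] (h : nwfdLE R n (k + 1) T.X₃) : nwfdLE R n k T.X₁ :=
  fun K hK ↦ (h K hK).syzygy hT

theorem IsNKWeakCotorsion.congr {M M' : ModuleCat.{u} Rᵐᵒᵖ} (h : IsNKWeakCotorsion R n k M)
    (e : M ≃ₗ[Rᵐᵒᵖ] M') : IsNKWeakCotorsion R n k M' :=
  fun N hN ↦ (h N hN).congr_right e

theorem IsNKWeakCotorsion.cosyzygy {C E D : ModuleCat.{u} Rᵐᵒᵖ} [Module.Injective Rᵐᵒᵖ E]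
    {ι : C →ₗ[Rᵐᵒᵖ] E} {p : E →ₗ[Rᵐᵒᵖ] D} (hι : Function.Injective ι)
    (hp : Function.Surjective p) (hexact : Function.Exact ι p) (h : IsNKWeakCotorsion R n k C) :
    IsNKWeakCotorsion R n (k + 1) D := by
  intro N hN
  have hQ := N.shortExact_projectiveShortComplex
  have : Module.Projective Rᵐᵒᵖ N.projectiveShortComplex.X₂ :=
    (IsProjective.iff_projective _).2 inferInstance
  have hExt₁ : extVanish Rᵐᵒᵖ 1 N.projectiveShortComplex.X₁ C := h _ (hN.syzygy hQ)
  have hExt₂ : extVanish Rᵐᵒᵖ 2 N C := hExt₁.of_syzygy hQ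
  exact hExt₂.cosyzygy hι hp hexact

end WeakCotorsion

/-- an `m`-th cosyzygy of an `(n,k)`-weak cotorsion module is
`(n, m+k)`-weak cotorsion. -/
theorem stmt5 (R : Type u) [Ring R] (n k m : ℕ) (M D : ModuleCat.{u} Rᵐᵒᵖ)
    (hM : IsNKWeakCotorsion R n k M) (hD : IsCosyzygy Rᵐᵒᵖ m M D) :
    IsNKWeakCotorsion R n (m + k) D := by
  induction m generalizing D with
  | zero =>
    obtain ⟨e⟩ := hD
    rw [Nat.zero_add]
    exact hM.congr e
  | succ m ih =>
    obtain ⟨C, E, hC, hE, ι, p, hι, hp, hexact⟩ := hD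
    rw [Nat.succ_add]
    exact (ih C hC).cosyzygy hι hp hexact
end

section
/- Suppose the n-weak injective dimension of R as a left module over itself is at most k. Then a right R-module M is (n,k)-weak cotorsion if and only if M is the kernel of some WF^n_k(R^op)-precover φ : E → D with E injective. -/
/-!
Common definitions for formalizing "(n,k)-weak cotorsion modules" over an arbitrary
(not necessarily commutative) ring `R`.  Left `R`-modules are objects of
`ModuleCat R`, right `R`-modules are objects of `ModuleCat Rᵐᵒᵖ`.

Since Mathlib does not provide `Tor` of a right module with a left module over a
noncommutative ring, we encode the vanishing of `Tor_i^R(N, M)` (for `N` a right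
module and `M` a left module) by the equivalent condition
`Ext^i_{Rᵐᵒᵖ}(N, M⋆) = 0`, where `M⋆ = Hom_ℤ(M, ℚ/ℤ)` is the character module
(a right module).  This is equivalent because `ℚ/ℤ` is an injective cogenerator:
`Ext^i_{Rᵐᵒᵖ}(N, M⋆) ≅ (Tor_i^R(N, M))⋆`, and an abelian group vanishes iff its
character group does.
-/

open CategoryTheory

universe u

/-!
Let `0 → M → E → D → 0` be exact with `E` injective. The long exact sequence of `Ext(F, -)` shows
that `Ext¹(F, M) = 0` if and only if every map `F → D` lifts to `E`. So, for any class `𝒞`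
containing the injectives, `Ext¹(F, M)` vanishes for all `F ∈ 𝒞` if and only if `E → D` is a
`𝒞`-precover.

The hypothesis on `R` puts the injectives in `WF^n_k(R^op)`: if `P` is finitely generated
projective, then `Hom_R(P, E⋆)` is naturally isomorphic to `Hom_{R^op}(Hom_R(P, R), E)⋆`, and both
`Hom_{R^op}(-, E)` and `(-)⋆` are exact when `E` is injective. Hence for a resolution `P_•` by such
modules, exactness of `Hom_R(P_•, R)` at a given degree passes to `Hom_R(P_•, E⋆)`.
-/

section ProjectiveResolution

open Limits

variable {C : Type*} [Category* C] [Abelian C]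

/-- The projective resolution of `X` given by an exact sequence `⋯ ⟶ F 1 ⟶ F 0 ⟶ X ⟶ 0` of
projective objects. Exactness is asked of the short complexes `F (i + 2) ⟶ F (i + 1) ⟶ F i`, and
at the right end of `F 1 ⟶ F 0 ⟶ X`. -/
noncomputable def projectiveResolutionOfExact {X : C} {F : ℕ → C} [∀ i, Projective (F i)]
    (d : ∀ i, F (i + 1) ⟶ F i) (p : F 0 ⟶ X) [Epi p]
    (hdp : d 0 ≫ p = 0) (exact_zero : (ShortComplex.mk _ _ hdp).Exact)
    (hdd : ∀ i, d (i + 1) ≫ d i = 0)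
    (exact_succ : ∀ i, (ShortComplex.mk _ _ (hdd i)).Exact) : ProjectiveResolution X where
  complex := ChainComplex.of F d hdd
  projective := inferInstance
  π := (ChainComplex.toSingle₀Equiv _ _).symm
    ⟨p, (congrArg (· ≫ p) (ChainComplex.of_d F d 0)).trans hdp⟩
  quasiIso := ⟨fun n ↦ by
    have d_eq (i : ℕ) : ChainComplex.of.d F d (i + 1) i = d i := ChainComplex.of_d F d i
    cases n with
    | zero =>
      rw [ChainComplex.quasiIsoAt₀_iff, ShortComplex.quasiIso_iff_of_zeros' _ rfl rfl rfl]
      refine (ShortComplex.exact_and_epi_g_iff_of_iso ?_).2 ⟨exact_zero, ‹Epi p›⟩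
      refine ShortComplex.isoMk (Iso.refl _) (Iso.refl _) (Iso.refl _) ?_ ?_
      · exact (Category.id_comp _).trans ((d_eq 0).symm.trans (Category.comp_id _).symm)
      · refine (Category.id_comp _).trans (Eq.trans ?_ (Category.comp_id _).symm)
        exact (ChainComplex.toSingle₀Equiv_symm_apply_f_zero (C := .of F d hdd) p _).symm
    | succ n =>
      rw [quasiIsoAt_iff_exactAt' _ _ (ChainComplex.exactAt_succ_single_obj _ _),
        HomologicalComplex.exactAt_iff' _ (n + 2) (n + 1) n (by simp) (by simp)]
      simpa [HomologicalComplex.sc', HomologicalComplex.shortComplexFunctor', d_eq]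
        using exact_succ n⟩

-- The target of `P.π.f 0` is `((ChainComplex.single₀ C).obj X).X 0`, which is `X` only after
-- unfolding.
theorem exists_augmentation_exact {X : C} (P : ProjectiveResolution X) :
    ∃ (p : P.complex.X 0 ⟶ X) (w : P.complex.d 1 0 ≫ p = 0),
      Epi p ∧ (ShortComplex.mk _ p w).Exact :=
  ⟨P.π.f 0, P.complex_d_comp_π_f_zero, inferInstanceAs (Epi (P.π.f 0)), P.exact₀⟩

variable {A : Type*} [Ring A] [Linear A C] [EnoughProjectives C]

theorem isZero_Ext_succ_iff {X : C} (P : ProjectiveResolution X) (i : ℕ) (Y : C) :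
    IsZero (((Ext A C (i + 1)).obj (Opposite.op X)).obj Y) ↔
      ∀ f : P.complex.X (i + 1) ⟶ Y, P.complex.d (i + 2) (i + 1) ≫ f = 0 →
        ∃ g : P.complex.X i ⟶ Y, P.complex.d (i + 1) i ≫ g = f := by
  rw [(P.isoExt (R := A) (i + 1) Y).isZero_iff,
    ← HomologicalComplex.exactAt_iff_isZero_homology,
    HomologicalComplex.exactAt_iff' _ i (i + 1) (i + 2) (by simp) (by simp),
    ShortComplex.moduleCat_exact_iff]
  exact Iff.rfl

theorem exists_lift_of_isZero_Ext_one {T : ShortComplex C} (hT : T.ShortExact) {X : C}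
    (hX : IsZero (((Ext A C 1).obj (Opposite.op X)).obj T.X₁)) (g : X ⟶ T.X₃) :
    ∃ h : X ⟶ T.X₂, h ≫ T.g = g := by
  have := hT.mono_f
  have := hT.epi_g
  let P := ProjectiveResolution.of X
  obtain ⟨p, hdp, _, exact_p⟩ := exists_augmentation_exact P
  obtain ⟨a, ha⟩ := Projective.factors (p ≫ g) T.g
  obtain ⟨c, hc⟩ := hT.exact.lift' (P.complex.d 1 0 ≫ a) (by simp [ha, reassoc_of% hdp])
  obtain ⟨b, hb⟩ := (isZero_Ext_succ_iff P 0 T.X₁).1 hX c (by simp [← cancel_mono T.f, hc])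
  obtain ⟨h, hh : p ≫ h = a - b ≫ T.f⟩ := exact_p.desc' (a - b ≫ T.f) (by
    simp [reassoc_of% hb, hc])
  exact ⟨h, by simp [← cancel_epi p, reassoc_of% hh, ha]⟩

theorem isZero_Ext_one_of_exists_lift {T : ShortComplex C} (hT : T.ShortExact)
    [Injective T.X₂] {X : C} (hX : ∀ g : X ⟶ T.X₃, ∃ h : X ⟶ T.X₂, h ≫ T.g = g) :
    IsZero (((Ext A C 1).obj (Opposite.op X)).obj T.X₁) := by
  have := hT.mono_f
  let P := ProjectiveResolution.of X
  obtain ⟨p, hdp, _, exact_p⟩ := exists_augmentation_exact P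
  refine (isZero_Ext_succ_iff P 0 T.X₁).2 fun f hf ↦ ?_
  obtain ⟨a, ha⟩ : ∃ a : P.complex.X 0 ⟶ T.X₂, P.complex.d 1 0 ≫ a = f ≫ T.f :=
    ⟨_, (P.exact_succ 0).comp_descToInjective (f ≫ T.f) (by simp [reassoc_of% hf])⟩
  obtain ⟨g, hg : p ≫ g = a ≫ T.g⟩ := exact_p.desc' (a ≫ T.g) (by simp [reassoc_of% ha])
  obtain ⟨h, rfl⟩ := hX g
  obtain ⟨b, hb⟩ := hT.exact.lift' (a - p ≫ h) (by simp [hg])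
  exact ⟨b, by simp [← cancel_mono T.f, hb, ha, reassoc_of% hdp]⟩

end ProjectiveResolution

section ModuleCat

variable {S : Type u} [Ring S]

theorem extVanish_iff_isZero {i : ℕ} {X Y : ModuleCat.{u} S} :
    extVanish S i X Y ↔
      Limits.IsZero (((Ext ℤ (ModuleCat.{u} S) i).obj (Opposite.op X)).obj Y) :=
  ModuleCat.isZero_iff_subsingleton.symm

theorem extVanish_succ_iff_s9 {X : ModuleCat.{u} S} (P : ProjectiveResolution X) (i : ℕ)
    (Y : ModuleCat.{u} S) :
    extVanish S (i + 1) X Y ↔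
      Function.Exact (LinearMap.lcomp ℤ Y (P.complex.d (i + 1) i).hom)
        (LinearMap.lcomp ℤ Y (P.complex.d (i + 2) (i + 1)).hom) := by
  rw [extVanish_iff_isZero, isZero_Ext_succ_iff P]
  constructor
  · refine fun H f ↦ ⟨fun hf ↦ ?_, ?_⟩
    · obtain ⟨g, hg⟩ := H (ModuleCat.ofHom f) (ModuleCat.hom_ext hf)
      exact ⟨g.hom, congrArg ModuleCat.Hom.hom hg⟩
    · rintro ⟨g, rfl⟩
      have hdd := congrArg ModuleCat.Hom.hom (P.complex.d_comp_d (i + 2) (i + 1) i)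
      exact LinearMap.ext fun x ↦ (congrArg g (DFunLike.congr_fun hdd x)).trans (map_zero g)
  · intro H f hf
    obtain ⟨g, hg⟩ := (H f.hom).1 (congrArg ModuleCat.Hom.hom hf)
    exact ⟨ModuleCat.ofHom g, ModuleCat.hom_ext hg⟩

theorem extVanish_one_iff_of_exact {M E D : ModuleCat.{u} S} (hE : Module.Injective S E)
    {ι : M →ₗ[S] E} {φ : E →ₗ[S] D} (hι : Function.Injective ι) (hφ : Function.Surjective φ)
    (hιφ : Function.Exact ι φ) (F : ModuleCat.{u} S) :
    extVanish S 1 F M ↔ ∀ g : F →ₗ[S] D, ∃ h : F →ₗ[S] E, φ ∘ₗ h = g := by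
  let T := ModuleCat.shortComplexOfCompEqZero ι φ hιφ.linearMap_comp_eq_zero
  have hT : T.ShortExact := ModuleCat.shortComplex_shortExact T hιφ hι hφ
  have : Injective T.X₂ := (Module.injective_iff_injective_object S E).1 hE
  rw [extVanish_iff_isZero]
  constructor
  · intro hF g
    obtain ⟨h, hh⟩ := exists_lift_of_isZero_Ext_one hT hF (ModuleCat.ofHom g)
    exact ⟨h.hom, congrArg ModuleCat.Hom.hom hh⟩
  · refine fun hF ↦ isZero_Ext_one_of_exists_lift hT fun g ↦ ?_
    obtain ⟨h, hh⟩ := hF g.hom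
    exact ⟨ModuleCat.ofHom h, ModuleCat.hom_ext hh⟩

theorem forall_extVanish_one_iff_exists_isPrecover {𝒞 : ModuleCat.{u} S → Prop}
    (h𝒞 : ∀ E : ModuleCat.{u} S, Module.Injective S E → 𝒞 E) (M : ModuleCat.{u} S) :
    (∀ F, 𝒞 F → extVanish S 1 F M) ↔
      ∃ (E D : ModuleCat.{u} S) (φ : E →ₗ[S] D),
        Module.Injective S E ∧ IsPrecover S 𝒞 E D φ ∧ Nonempty (M ≃ₗ[S] LinearMap.ker φ) := by
  constructor
  · intro hM
    let E := Injective.under M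
    let ι : M →ₗ[S] E := (Injective.ι M).hom
    have hι : Function.Injective ι := (ModuleCat.mono_iff_injective _).1 inferInstance
    have hE : Module.Injective S E :=
      (Module.injective_iff_injective_object S E).2 (Injective.injective_under M)
    let φ : E →ₗ[S] ModuleCat.of S (E ⧸ LinearMap.range ι) := (LinearMap.range ι).mkQ
    have lift_iff := extVanish_one_iff_of_exact hE hι (φ := φ) (Submodule.mkQ_surjective _)
      (LinearMap.exact_map_mkQ_range ι)
    exact ⟨E, _, φ, hE, ⟨h𝒞 E hE, fun F hF ↦ (lift_iff F).1 (hM F hF)⟩,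
      ⟨(LinearEquiv.ofInjective ι hι).trans (.ofEq _ _ (Submodule.ker_mkQ _).symm)⟩⟩
  · rintro ⟨E, D, φ, hE, ⟨-, lift_φ⟩, ⟨e⟩⟩ F hF
    let ι : M →ₗ[S] E := (LinearMap.ker φ).subtype ∘ₗ e
    let φ' : E →ₗ[S] ModuleCat.of S (LinearMap.range φ) := φ.rangeRestrict
    have hι : Function.Injective ι := (Submodule.injective_subtype _).comp e.injective
    have hιφ : Function.Exact ι φ' := by
      rw [LinearMap.exact_iff, LinearMap.ker_rangeRestrict]
      simp [ι, LinearMap.range_comp]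
    refine (extVanish_one_iff_of_exact hE hι φ.surjective_rangeRestrict hιφ F).2 fun g ↦ ?_
    obtain ⟨h, hh⟩ := lift_φ F hF ((LinearMap.range φ).subtype ∘ₗ g)
    exact ⟨h, LinearMap.ext fun x ↦ Subtype.ext (DFunLike.congr_fun hh x)⟩

theorem exists_finite_projectiveResolution_of_exact {K : ModuleCat.{u} S}
    {F : ℕ → ModuleCat.{u} S} [∀ i, Module.Projective S (F i)] [∀ i, Module.Finite S (F i)]
    {d : ∀ i, F (i + 1) →ₗ[S] F i} {p : F 0 →ₗ[S] K} (hp : Function.Surjective p)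
    (hdp : Function.Exact (d 0) p) (hdd : ∀ i, Function.Exact (d (i + 1)) (d i)) :
    ∃ P : ProjectiveResolution K, ∀ i, Module.Finite S (P.complex.X i) := by
  have : Epi (ModuleCat.ofHom p) := (ModuleCat.epi_iff_surjective _).2 hp
  let δ (i : ℕ) : F (i + 1) ⟶ F i := ModuleCat.ofHom (d i)
  let P : ProjectiveResolution K := projectiveResolutionOfExact δ (ModuleCat.ofHom p)
    (ModuleCat.hom_ext hdp.linearMap_comp_eq_zero) (ModuleCat.shortComplex_exact _ hdp)
    (fun i ↦ ModuleCat.hom_ext (hdd i).linearMap_comp_eq_zero)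
    (fun i ↦ ModuleCat.shortComplex_exact _ (hdd i))
  exact ⟨P, fun i ↦ inferInstanceAs (Module.Finite S (F i))⟩

theorem IsSpecialSFP.exists_finite_projectiveResolution {n : ℕ} {K : ModuleCat.{u} S}
    (hK : IsSpecialSFP S n K) :
    ∃ P : ProjectiveResolution K, ∀ i, Module.Finite S (P.complex.X i) := by
  obtain ⟨U, F, d, p, proj, fin, hp, hdp, hdd, hK⟩ := hK
  cases n with
  | zero =>
    obtain ⟨e⟩ : Nonempty (K ≃ₗ[S] U) := by simpa using hK
    have (i : ℕ) : Module.Finite S (F i) := fin i i.zero_le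
    exact exists_finite_projectiveResolution_of_exact (p := e.symm.toLinearMap ∘ₗ p)
      (e.symm.surjective.comp hp) (fun x ↦ by simpa using hdp x) hdd
  | succ m =>
    obtain ⟨e⟩ : Nonempty (K ≃ₗ[S] LinearMap.range (d m)) := by simpa using hK
    have (i : ℕ) : Module.Finite S (F (m + 1 + i)) := fin _ (Nat.le_add_right _ _)
    exact exists_finite_projectiveResolution_of_exact (F := fun i ↦ F (m + 1 + i))
      (d := fun i ↦ d (m + 1 + i)) (p := e.symm.toLinearMap ∘ₗ (d m).rangeRestrict)
      (e.symm.surjective.comp (d m).surjective_rangeRestrict)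
      (fun x ↦ by simpa [← Subtype.coe_inj] using! hdd m x) (fun i ↦ hdd (m + 1 + i))

end ModuleCat

section CharacterDuality

theorem exact_lcomp_of_baer {S A B C Q : Type*} [Ring S] [AddCommGroup A] [AddCommGroup B]
    [AddCommGroup C] [AddCommGroup Q] [Module S A] [Module S B] [Module S C] [Module S Q]
    (hQ : Module.Baer S Q) {f : A →ₗ[S] B} {g : B →ₗ[S] C} (hfg : Function.Exact f g) :
    Function.Exact (LinearMap.lcomp ℤ Q g) (LinearMap.lcomp ℤ Q f) := by
  refine fun t ↦ ⟨fun (ht : t ∘ₗ f = 0) ↦ ?_, ?_⟩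
  · have ker_le : LinearMap.ker g ≤ LinearMap.ker t := by
      rw [LinearMap.exact_iff.1 hfg, LinearMap.range_le_ker_iff, ht]
    obtain ⟨s, hs⟩ := hQ.extension_property ((LinearMap.ker g).liftQ g le_rfl)
      (LinearMap.ker_eq_bot.1 (Submodule.ker_liftQ_eq_bot' _ g rfl))
      ((LinearMap.ker g).liftQ t ker_le)
    exact ⟨s, LinearMap.ext fun b ↦ DFunLike.congr_fun hs (Submodule.Quotient.mk b)⟩
  · rintro ⟨s, rfl⟩
    ext a
    simp [hfg.apply_apply_eq_zero]

theorem exists_sum_smul_eq (R P : Type*) [Ring R] [AddCommGroup P] [Module R P]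
    [Module.Finite R P] [Module.Projective R P] :
    ∃ (n : ℕ) (b : Fin n → P) (c : Fin n → Module.Dual R P), ∀ x, ∑ i, c i x • b i = x := by
  obtain ⟨n, f, g, -, -, hfg⟩ := Module.Finite.exists_comp_eq_id_of_projective R P
  refine ⟨n, fun i ↦ f (Pi.single i 1), fun i ↦ LinearMap.proj i ∘ₗ g, fun x ↦ ?_⟩
  calc ∑ i, g x i • f (Pi.single i 1) = f (∑ i, g x i • Pi.single i 1) := by simp
    _ = f (g x) := by rw [← pi_eq_sum_univ' (g x)]
    _ = x := DFunLike.congr_fun hfg x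

section EvalSMul

variable {R P E : Type*} [Ring R] [AddCommGroup P] [Module R P] [AddCommGroup E] [Module Rᵐᵒᵖ E]

/-- The map `P ⊗ E → Hom_{R^op}(Hom_R(P, R), E)` sending `x ⊗ y` to `a ↦ y · a x`, as a biadditive
map. It is balanced over `R` by `evalSMul_smul`. -/
def evalSMul (R P E : Type*) [Ring R] [AddCommGroup P] [Module R P] [AddCommGroup E]
    [Module Rᵐᵒᵖ E] :
    P →+ E →+ (Module.Dual R P →ₗ[Rᵐᵒᵖ] E) :=
  AddMonoidHom.mk' (fun x ↦ AddMonoidHom.mk' (fun y ↦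
    { toFun := fun a ↦ MulOpposite.op (a x) • y
      map_add' := fun a b ↦ by simp [add_smul]
      map_smul' := fun r a ↦ by simp [mul_smul] })
    fun y z ↦ LinearMap.ext fun a ↦ smul_add _ _ _)
    fun x z ↦ AddMonoidHom.ext fun y ↦ LinearMap.ext fun a ↦ by simp [add_smul]

theorem evalSMul_apply (x : P) (y : E) (a : Module.Dual R P) :
    evalSMul R P E x y a = MulOpposite.op (a x) • y :=
  rfl

theorem evalSMul_smul (r : R) (x : P) (y : E) :
    evalSMul R P E (r • x) y = evalSMul R P E x (MulOpposite.op r • y) := by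
  ext a
  simp [evalSMul_apply, mul_smul]

theorem eq_sum_evalSMul {ι : Type*} [Fintype ι] {b : ι → P} {c : ι → Module.Dual R P}
    (hbc : ∀ x, ∑ i, c i x • b i = x) (t : Module.Dual R P →ₗ[Rᵐᵒᵖ] E) :
    t = ∑ i, evalSMul R P E (b i) (t (c i)) := by
  ext a
  have a_eq : a = ∑ i, MulOpposite.op (a (b i)) • c i := by
    ext x
    conv_lhs => rw [← hbc x]
    simp
  conv_lhs => rw [a_eq]
  simp [evalSMul_apply]

end EvalSMul

theorem CharGroup.toHom_sum {ι : Type*} [Fintype ι] {N : Type u} [AddCommGroup N]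
    (f : ι → CharGroup N) (y : N) :
    CharGroup.toHom (∑ i, f i) y = ∑ i, CharGroup.toHom (f i) y :=
  AddMonoidHom.finsetSum_apply (N := AddCircle (1 : ℚ)) f Finset.univ y

variable {R : Type u} [Ring R] {P P₀ P₁ P₂ : Type*} [AddCommGroup P] [AddCommGroup P₀]
  [AddCommGroup P₁] [AddCommGroup P₂] [Module R P] [Module R P₀] [Module R P₁] [Module R P₂]
  {E : Type u} [AddCommGroup E] [Module Rᵐᵒᵖ E]

/-- The natural map `Hom_{R^op}(Hom_R(P, R), E)⋆ → Hom_R(P, E⋆)` dual to `evalSMul`. It is an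
isomorphism for `P` finitely generated projective. -/
def charEvalHom (R : Type u) (P : Type*) (E : Type u) [Ring R] [AddCommGroup P] [Module R P]
    [AddCommGroup E] [Module Rᵐᵒᵖ E] :
    ((Module.Dual R P →ₗ[Rᵐᵒᵖ] E) →ₗ[ℤ] AddCircle (1 : ℚ)) →ₗ[ℤ] (P →ₗ[R] CharGroup E) where
  toFun l :=
    { toFun := fun x ↦ CharGroup.ofHom (l.toAddMonoidHom.comp (evalSMul R P E x))
      map_add' := fun x z ↦ CharGroup.hom_ext fun y ↦ by
        change l (evalSMul R P E (x + z) y) = l (evalSMul R P E x y) + l (evalSMul R P E z y)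
        simp
      map_smul' := fun r x ↦ CharGroup.hom_ext fun y ↦ congrArg l (evalSMul_smul r x y) }
  map_add' _ _ := rfl
  map_smul' _ _ := rfl

theorem toHom_charEvalHom (l : (Module.Dual R P →ₗ[Rᵐᵒᵖ] E) →ₗ[ℤ] AddCircle (1 : ℚ))
    (x : P) (y : E) : CharGroup.toHom (charEvalHom R P E l x) y = l (evalSMul R P E x y) :=
  rfl

theorem lcomp_comp_charEvalHom (d : P₁ →ₗ[R] P₀) :
    LinearMap.lcomp ℤ (CharGroup E) d ∘ₗ charEvalHom R P₀ E =
      charEvalHom R P₁ E ∘ₗ LinearMap.lcomp ℤ _ (LinearMap.lcomp ℤ E (LinearMap.lcomp Rᵐᵒᵖ R d)) :=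
  rfl

theorem charEvalHom_bijective [Module.Finite R P] [Module.Projective R P] :
    Function.Bijective (charEvalHom R P E) := by
  obtain ⟨n, b, c, hbc⟩ := exists_sum_smul_eq R P
  constructor
  · refine (injective_iff_map_eq_zero _).2 fun l hl ↦ LinearMap.ext fun t ↦ ?_
    rw [eq_sum_evalSMul hbc t, map_sum]
    exact Finset.sum_eq_zero fun i _ ↦ by rw [← toHom_charEvalHom, hl]; rfl
  · intro f
    let l : (Module.Dual R P →ₗ[Rᵐᵒᵖ] E) →+ AddCircle (1 : ℚ) :=
      ∑ i, (CharGroup.toHom (f (b i))).comp (LinearMap.evalAddMonoidHom (c i))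
    refine ⟨l.toIntLinearMap, LinearMap.ext fun x ↦ CharGroup.hom_ext fun y ↦ ?_⟩
    rw [toHom_charEvalHom]
    calc l (evalSMul R P E x y)
      _ = ∑ i, CharGroup.toHom (f (b i)) (MulOpposite.op (c i x) • y) := by
        simp [l, evalSMul_apply]
      _ = CharGroup.toHom (∑ i, c i x • f (b i)) y :=
        (CharGroup.toHom_sum (fun i ↦ c i x • f (b i)) y).symm
      _ = CharGroup.toHom (f x) y := by simp_rw [← map_smul, ← map_sum, hbc]

theorem exact_lcomp_charGroup (hE : Module.Baer Rᵐᵒᵖ E)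
    [Module.Finite R P₀] [Module.Projective R P₀] [Module.Finite R P₁] [Module.Projective R P₁]
    [Module.Finite R P₂] [Module.Projective R P₂] {d₁ : P₁ →ₗ[R] P₀} {d₂ : P₂ →ₗ[R] P₁}
    (h : Function.Exact (LinearMap.lcomp Rᵐᵒᵖ R d₁) (LinearMap.lcomp Rᵐᵒᵖ R d₂)) :
    Function.Exact (LinearMap.lcomp ℤ (CharGroup E) d₁) (LinearMap.lcomp ℤ (CharGroup E) d₂) :=
  Function.Exact.of_ladder_linearEquiv_of_exact
    (e₁ := .ofBijective _ charEvalHom_bijective) (e₂ := .ofBijective _ charEvalHom_bijective)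
    (e₃ := .ofBijective _ charEvalHom_bijective)
    (lcomp_comp_charEvalHom d₁) (lcomp_comp_charEvalHom d₂)
    (exact_lcomp_of_baer (.of_divisible _) (exact_lcomp_of_baer hE h))

theorem nwfdLE_of_injective {n k : ℕ} (h : nwidLE R n k (ModuleCat.of R R))
    (E : ModuleCat.{u} Rᵐᵒᵖ) (hE : Module.Injective Rᵐᵒᵖ E) : nwfdLE R n k E := by
  intro K hK
  obtain ⟨P, finite⟩ := hK.exists_finite_projectiveResolution
  have projective (i : ℕ) : Module.Projective R (P.complex.X i) :=
    (IsProjective.iff_projective _).2 (P.projective i)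
  -- Exactness only concerns the underlying functions, so `LinearMap.lcomp ℤ R` in
  -- `extVanish_succ_iff` may be read as `LinearMap.lcomp Rᵐᵒᵖ R`.
  exact (extVanish_succ_iff_s9 P k _).2 <| exact_lcomp_charGroup (.of_injective hE) <|
    (extVanish_succ_iff_s9 P k _).1 (h K hK)

end CharacterDuality

/-- if `n-wid(_R R) ≤ k`, then `M` is `(n,k)`-weak cotorsion iff `M` is
the kernel of a `WF^n_k(R^op)`-precover `φ : E → D` with `E` injective. -/
theorem stmt9 (R : Type u) [Ring R] (n k : ℕ)
    (h : nwidLE R n k (ModuleCat.of R R)) (M : ModuleCat.{u} Rᵐᵒᵖ) :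
    IsNKWeakCotorsion R n k M ↔
      ∃ (E D : ModuleCat.{u} Rᵐᵒᵖ) (φ : E →ₗ[Rᵐᵒᵖ] D),
        Module.Injective Rᵐᵒᵖ E ∧ IsPrecover Rᵐᵒᵖ (nwfdLE R n k) E D φ ∧
        Nonempty ((M : Type u) ≃ₗ[Rᵐᵒᵖ] LinearMap.ker φ) :=
  forall_extVanish_one_iff_exists_isPrecover (nwfdLE_of_injective h) M
end
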